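/- arXiv:2308.12126 — 2 statements merged into one kernel-verified Lean document; each statement's English description precedes it below -/
import Mathlib

section
/- Let E₁ and E₂ be real Hilbert spaces, H : E₁ × E₂ → ℝ, F₁ : E₁ → ℝ, F₂ : E₂ → ℝ, and let (y₁, y₂) ∈ E₁ × E₂, σ₁, σ₂ > 0. Suppose the map u ↦ H(u, y₂) is differentiable with gradient L₁-Lipschitz, and set g₁ = ∇_u H(u, y₂)|_{u = y₁}. Let x₁⁺ minimize over E₁ the function x ↦ F₁(x) + ⟨g₁, x − y₁⟩ + (1/(2σ₁))‖x − y₁‖². Suppose further that v ↦ H(x₁⁺, v) is differentiable with gradient L₂-Lipschitz, set g₂ = ∇_v H(x₁⁺, v)|_{v = y₂}, and let x₂⁺ minimize over E₂ the function x ↦ F₂(x) + ⟨g₂, x − y₂⟩ + (1/(2σ₂))‖x − y₂‖². Then, with ρ = min(1/(2σ₁) − L₁/2, 1/(2σ₂) − L₂/2), one has H(x₁⁺, x₂⁺) + F₁(x₁⁺) + F₂(x₂⁺) ≤ H(y₁, y₂) + F₁(y₁) + F₂(y₂) − ρ·(‖x₁⁺ − y₁‖² + ‖x₂⁺ − y₂‖²).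 (Two-block Gauss–Seidel step of the sufficient-decrease Theorem 4.1(i).) -/
open scoped RealInnerProductSpace

/-!
Along the segment from `y` to `x`, a one-sided Lipschitz bound on the derivative of `h` integrates
to the quadratic upper bound `h x ≤ h y + h' y (x - y) + L / 2 * ‖x - y‖ ^ 2`. A proximal-linear
step does not increase its model above the value `F y` taken at `y`, so adding the two inequalities
cancels the linear term and each block decreases the objective by `(1 / (2 * σ) - L / 2)` times the
squared step length. In the sum over the two blocks the intermediate value `H (x₁, y₂)` telescopes.
-/

section DescentLemma

theorem image_le_quadratic_of_deriv_sub_le {φ φ' : ℝ → ℝ} {a b L : ℝ} (hab : a ≤ b)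
    (hφ : ∀ t ∈ Set.Icc a b, HasDerivWithinAt φ (φ' t) (Set.Icc a b) t)
    (hL : ∀ t ∈ Set.Ico a b, φ' t - φ' a ≤ L * (t - a)) :
    φ b ≤ φ a + φ' a * (b - a) + L / 2 * (b - a) ^ 2 := by
  have hquad (t : ℝ) : HasDerivAt (fun t => φ a + φ' a * (t - a) + L / 2 * (t - a) ^ 2)
      (φ' a + L * (t - a)) t := by
    have hsub : HasDerivAt (fun t => t - a) 1 t := (hasDerivAt_id t).sub_const a
    refine (((hsub.const_mul (φ' a)).const_add (φ a)).add
      ((hsub.pow 2).const_mul (L / 2))).congr_deriv ?_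
    norm_num only
    ring
  exact image_le_of_deriv_right_le_deriv_boundary
    (fun t ht => (hφ t ht).continuousWithinAt)
    (fun t ht => (hφ t (Set.Ico_subset_Icc_self ht)).mono_of_mem_nhdsWithin
      (Icc_mem_nhdsGE_of_mem ht))
    (by simp) (fun t _ => (hquad t).continuousAt.continuousWithinAt)
    (fun t _ => (hquad t).hasDerivWithinAt)
    (fun t ht => by linarith [hL t ht]) (Set.right_mem_Icc.2 hab)

variable {E : Type*} [NormedAddCommGroup E] [NormedSpace ℝ E]

theorem image_le_quadratic_of_fderiv_sub_le {f : E → ℝ} {f' : E → E →L[ℝ] ℝ} {L : ℝ} {x y : E}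
    (hf : ∀ u ∈ segment ℝ y x, HasFDerivWithinAt f (f' u) (segment ℝ y x) u)
    (hL : ∀ u ∈ segment ℝ y x, (f' u - f' y) (u - y) ≤ L * ‖u - y‖ ^ 2) :
    f x ≤ f y + f' y (x - y) + L / 2 * ‖x - y‖ ^ 2 := by
  let γ : ℝ → E := AffineMap.lineMap y x
  have hγ_maps : Set.MapsTo γ (Set.Icc 0 1) (segment ℝ y x) := fun _ ht =>
    lineMap_mem_segment ℝ y x ht
  have hγ_sub (t : ℝ) : γ t - y = t • (x - y) := by simp [γ, AffineMap.lineMap_apply]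
  have hderiv : ∀ t ∈ Set.Icc (0 : ℝ) 1,
      HasDerivWithinAt (f ∘ γ) (f' (γ t) (x - y)) (Set.Icc 0 1) t := fun t ht =>
    (hf (γ t) (hγ_maps ht)).comp_hasDerivWithinAt t AffineMap.hasDerivWithinAt_lineMap hγ_maps
  have hderiv_sub : ∀ t ∈ Set.Ico (0 : ℝ) 1,
      f' (γ t) (x - y) - f' (γ 0) (x - y) ≤ L * ‖x - y‖ ^ 2 * (t - 0) := by
    intro t ht
    rcases ht.1.eq_or_lt with rfl | ht_pos
    · simp
    · have hbound := hL (γ t) (hγ_maps (Set.Ico_subset_Icc_self ht))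
      rw [hγ_sub, map_smul, smul_eq_mul, norm_smul, Real.norm_of_nonneg ht.1] at hbound
      refine le_of_mul_le_mul_left ?_ ht_pos
      calc
        t * (f' (γ t) (x - y) - f' (γ 0) (x - y)) = t * (f' (γ t) - f' y) (x - y) := by simp [γ]
        _ ≤ L * (t * ‖x - y‖) ^ 2 := hbound
        _ = t * (L * ‖x - y‖ ^ 2 * (t - 0)) := by ring
  simpa [γ, mul_div_right_comm] using
    image_le_quadratic_of_deriv_sub_le zero_le_one hderiv hderiv_sub

end DescentLemma

section ProxLinear

variable {E : Type*} [NormedAddCommGroup E] [NormedSpace ℝ E]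

/-- The objective of a proximal-linear step from `y`, for a function `F` and a slope `g`. The
proximal weight is `c = 1 / (2 * σ)` in terms of the step size `σ`. -/
def proxLinearModel (F : E → ℝ) (g : E →L[ℝ] ℝ) (c : ℝ) (y x : E) : ℝ :=
  F x + g (x - y) + c * ‖x - y‖ ^ 2

theorem proxLinearModel_self (F : E → ℝ) (g : E →L[ℝ] ℝ) (c : ℝ) (y : E) :
    proxLinearModel F g c y y = F y := by
  simp [proxLinearModel]

theorem add_le_sub_of_proxLinearModel_le {h F : E → ℝ} {h' : E → E →L[ℝ] ℝ} {c L : ℝ} {x y : E}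
    (hh : ∀ u ∈ segment ℝ y x, HasFDerivWithinAt h (h' u) (segment ℝ y x) u)
    (hL : ∀ u ∈ segment ℝ y x, (h' u - h' y) (u - y) ≤ L * ‖u - y‖ ^ 2)
    (hx : proxLinearModel F (h' y) c y x ≤ F y) :
    h x + F x ≤ h y + F y - (c - L / 2) * ‖x - y‖ ^ 2 := by
  have hdescent := image_le_quadratic_of_fderiv_sub_le hh hL
  unfold proxLinearModel at hx
  linarith

end ProxLinear

theorem min_mul_add_le {R : Type*} [Semiring R] [LinearOrder R] [IsOrderedRing R] {a b p q : R}
    (hp : 0 ≤ p) (hq : 0 ≤ q) :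
    min a b * (p + q) ≤ a * p + b * q := by
  rw [mul_add]
  gcongr
  exacts [min_le_left a b, min_le_right a b]

theorem two_block_prox_linear_sufficient_decrease_general
    {E₁ E₂ : Type*} [NormedAddCommGroup E₁] [NormedSpace ℝ E₁]
    [NormedAddCommGroup E₂] [NormedSpace ℝ E₂]
    {H : E₁ × E₂ → ℝ} {F₁ : E₁ → ℝ} {F₂ : E₂ → ℝ} {x₁ y₁ : E₁} {x₂ y₂ : E₂} {c₁ c₂ L₁ L₂ : ℝ}
    {D₁ : E₁ → E₁ →L[ℝ] ℝ} {D₂ : E₂ → E₂ →L[ℝ] ℝ}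
    (hD₁ : ∀ u ∈ segment ℝ y₁ x₁,
      HasFDerivWithinAt (fun u' => H (u', y₂)) (D₁ u) (segment ℝ y₁ x₁) u)
    (hL₁ : ∀ u ∈ segment ℝ y₁ x₁, (D₁ u - D₁ y₁) (u - y₁) ≤ L₁ * ‖u - y₁‖ ^ 2)
    (hx₁ : proxLinearModel F₁ (D₁ y₁) c₁ y₁ x₁ ≤ F₁ y₁)
    (hD₂ : ∀ v ∈ segment ℝ y₂ x₂,
      HasFDerivWithinAt (fun v' => H (x₁, v')) (D₂ v) (segment ℝ y₂ x₂) v)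
    (hL₂ : ∀ v ∈ segment ℝ y₂ x₂, (D₂ v - D₂ y₂) (v - y₂) ≤ L₂ * ‖v - y₂‖ ^ 2)
    (hx₂ : proxLinearModel F₂ (D₂ y₂) c₂ y₂ x₂ ≤ F₂ y₂) :
    H (x₁, x₂) + F₁ x₁ + F₂ x₂ ≤
      H (y₁, y₂) + F₁ y₁ + F₂ y₂ -
        min (c₁ - L₁ / 2) (c₂ - L₂ / 2) * (‖x₁ - y₁‖ ^ 2 + ‖x₂ - y₂‖ ^ 2) := by
  have hdecrease₁ := add_le_sub_of_proxLinearModel_le hD₁ hL₁ hx₁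
  have hdecrease₂ := add_le_sub_of_proxLinearModel_le hD₂ hL₂ hx₂
  have hmin : min (c₁ - L₁ / 2) (c₂ - L₂ / 2) * (‖x₁ - y₁‖ ^ 2 + ‖x₂ - y₂‖ ^ 2) ≤
      (c₁ - L₁ / 2) * ‖x₁ - y₁‖ ^ 2 + (c₂ - L₂ / 2) * ‖x₂ - y₂‖ ^ 2 :=
    min_mul_add_le (sq_nonneg _) (sq_nonneg _)
  linarith

section Gradient

variable {E : Type*} [NormedAddCommGroup E] [InnerProductSpace ℝ E] [CompleteSpace E]

theorem toDual_sub_toDual_apply_le_of_norm_sub_le {a b d : E} {L : ℝ} (h : ‖a - b‖ ≤ L * ‖d‖) :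
    (InnerProductSpace.toDual ℝ E a - InnerProductSpace.toDual ℝ E b) d ≤ L * ‖d‖ ^ 2 :=
  calc
    (InnerProductSpace.toDual ℝ E a - InnerProductSpace.toDual ℝ E b) d = ⟪a - b, d⟫ := by
      rw [← map_sub, InnerProductSpace.toDual_apply_apply]
    _ ≤ ‖a - b‖ * ‖d‖ := real_inner_le_norm _ _
    _ ≤ L * ‖d‖ * ‖d‖ := by gcongr
    _ = L * ‖d‖ ^ 2 := by ring

theorem proxLinearModel_toDual (F : E → ℝ) (g : E) (σ : ℝ) (y x : E) :
    proxLinearModel F (InnerProductSpace.toDual ℝ E g) (1 / (2 * σ)) y x =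
      F x + ⟪g, x - y⟫ + ‖x - y‖ ^ 2 / (2 * σ) := by
  rw [proxLinearModel, InnerProductSpace.toDual_apply_apply, one_div_mul_eq_div]

end Gradient

/-- two-block Gauss–Seidel sufficient decrease of the prox-linear steps. -/
theorem two_block_prox_linear_sufficient_decrease
    {E₁ E₂ : Type*}
    [NormedAddCommGroup E₁] [InnerProductSpace ℝ E₁] [CompleteSpace E₁]
    [NormedAddCommGroup E₂] [InnerProductSpace ℝ E₂] [CompleteSpace E₂]
    (H : E₁ × E₂ → ℝ) (F₁ : E₁ → ℝ) (F₂ : E₂ → ℝ)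
    (y₁ : E₁) (y₂ : E₂) (σ₁ σ₂ : ℝ) (hσ₁ : 0 < σ₁) (hσ₂ : 0 < σ₂)
    (L₁ L₂ : ℝ) (hL₁ : 0 ≤ L₁) (hL₂ : 0 ≤ L₂)
    (G₁ : E₁ → E₁)
    (hG₁ : ∀ u : E₁, HasGradientAt (fun u' => H (u', y₂)) (G₁ u) u)
    (hG₁lip : ∀ u v : E₁, ‖G₁ u - G₁ v‖ ≤ L₁ * ‖u - v‖)
    (x₁p : E₁)
    (hmin₁ : ∀ x : E₁,
      F₁ x₁p + ⟪G₁ y₁, x₁p - y₁⟫ + ‖x₁p - y₁‖ ^ 2 / (2 * σ₁) ≤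
        F₁ x + ⟪G₁ y₁, x - y₁⟫ + ‖x - y₁‖ ^ 2 / (2 * σ₁))
    (G₂ : E₂ → E₂)
    (hG₂ : ∀ v : E₂, HasGradientAt (fun v' => H (x₁p, v')) (G₂ v) v)
    (hG₂lip : ∀ u v : E₂, ‖G₂ u - G₂ v‖ ≤ L₂ * ‖u - v‖)
    (x₂p : E₂)
    (hmin₂ : ∀ x : E₂,
      F₂ x₂p + ⟪G₂ y₂, x₂p - y₂⟫ + ‖x₂p - y₂‖ ^ 2 / (2 * σ₂) ≤
        F₂ x + ⟪G₂ y₂, x - y₂⟫ + ‖x - y₂‖ ^ 2 / (2 * σ₂)) :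
    H (x₁p, x₂p) + F₁ x₁p + F₂ x₂p ≤
      H (y₁, y₂) + F₁ y₁ + F₂ y₂ -
        min (1 / (2 * σ₁) - L₁ / 2) (1 / (2 * σ₂) - L₂ / 2) *
          (‖x₁p - y₁‖ ^ 2 + ‖x₂p - y₂‖ ^ 2) :=
  two_block_prox_linear_sufficient_decrease_general
    (fun u _ => (hG₁ u).hasFDerivAt.hasFDerivWithinAt)
    (fun u _ => toDual_sub_toDual_apply_le_of_norm_sub_le (hG₁lip u y₁))
    (by simpa only [← proxLinearModel_toDual, proxLinearModel_self] using hmin₁ y₁)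
    (fun v _ => (hG₂ v).hasFDerivAt.hasFDerivWithinAt)
    (fun v _ => toDual_sub_toDual_apply_le_of_norm_sub_le (hG₂lip v y₂))
    (by simpa only [← proxLinearModel_toDual, proxLinearModel_self] using hmin₂ y₂)
end

section
/- Let a, d : ℕ → ℝ be nonnegative sequences with d summable, and suppose (a(k+1))² ≤ d(k)·a(k) for all k ∈ ℕ. Then a is summable, with ∑_{k≥1} a(k) ≤ a(0) + ∑_k d(k). (Key summation lemma in the proof of Theorem 4.6, obtained from 2ab ≤ a² + b² applied to the KŁ inequality ‖z^{k+1} − w^k‖² ≤ C(φ(G k) − φ(G(k+1)))·‖z^k − w^{k−1}‖.) -/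
/-! By AM-GM, the hypothesis `a (k+1) ^ 2 ≤ d k * a k` gives `2 * a (k+1) ≤ d k + a k`. Moving one
copy of `a (k+1)` next to `a k` makes this the descent inequality
`a (k+1) + a (k+1) ≤ a k + d k`, in which the sequence `a` acts as a Lyapunov function for its own
shift, so that the partial sums telescope. -/

section Descent

open Finset

section Ordered

variable {M : Type*} [AddCommMonoid M] [PartialOrder M] [IsOrderedAddMonoid M] {b d V : ℕ → M}

theorem sum_range_add_le_of_add_succ_le (h : ∀ k, b k + V (k + 1) ≤ V k + d k) (n : ℕ) :
    ∑ k ∈ range n, b k + V n ≤ V 0 + ∑ k ∈ range n, d k := by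
  induction n with
  | zero => simp
  | succ n ih =>
    calc ∑ k ∈ range (n + 1), b k + V (n + 1)
        = ∑ k ∈ range n, b k + (b n + V (n + 1)) := by rw [sum_range_succ, add_assoc]
      _ ≤ ∑ k ∈ range n, b k + (V n + d n) := add_le_add_right (h n) _
      _ = ∑ k ∈ range n, b k + V n + d n := (add_assoc _ _ _).symm
      _ ≤ V 0 + ∑ k ∈ range n, d k + d n := by gcongr
      _ = V 0 + ∑ k ∈ range (n + 1), d k := by rw [sum_range_succ, add_assoc]

theorem sum_range_le_of_add_succ_le (hV : ∀ k, 0 ≤ V k)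
    (h : ∀ k, b k + V (k + 1) ≤ V k + d k) (n : ℕ) :
    ∑ k ∈ range n, b k ≤ V 0 + ∑ k ∈ range n, d k :=
  (le_add_of_nonneg_right (hV n)).trans (sum_range_add_le_of_add_succ_le h n)

theorem hasSum_le_of_add_succ_le [TopologicalSpace M] [ContinuousAdd M] [OrderClosedTopology M]
    {B D : M} (hV : ∀ k, 0 ≤ V k) (h : ∀ k, b k + V (k + 1) ≤ V k + d k)
    (hb : HasSum b B) (hd : HasSum d D) : B ≤ V 0 + D :=
  le_of_tendsto_of_tendsto' hb.tendsto_sum_nat (hd.tendsto_sum_nat.const_add (V 0))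
    (sum_range_le_of_add_succ_le hV h)

end Ordered

theorem summable_of_add_succ_le {b d V : ℕ → ℝ} (hb : ∀ k, 0 ≤ b k) (hV : ∀ k, 0 ≤ V k)
    (h : ∀ k, b k + V (k + 1) ≤ V k + d k) (hd : Summable d) : Summable b := by
  obtain ⟨C, hC⟩ := hd.hasSum.tendsto_sum_nat.bddAbove_range
  refine summable_of_sum_range_le (c := V 0 + C) hb fun n => ?_
  calc ∑ k ∈ range n, b k ≤ V 0 + ∑ k ∈ range n, d k := sum_range_le_of_add_succ_le hV h n
    _ ≤ V 0 + C := by gcongr; exact hC ⟨n, rfl⟩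

end Descent

/-- if `a, d ≥ 0`, `d` is summable, and `a (k+1) ^ 2 ≤ d k * a k` for all `k`,
then `a` is summable with `∑_{k ≥ 1} a k ≤ a 0 + ∑ k, d k`. -/
theorem summable_of_sq_le_mul
    (a d : ℕ → ℝ) (ha : ∀ k, 0 ≤ a k) (hd : ∀ k, 0 ≤ d k)
    (hd_sum : Summable d)
    (hrec : ∀ k : ℕ, (a (k + 1)) ^ 2 ≤ d k * a k) :
    Summable a ∧ (∑' k : ℕ, a (k + 1)) ≤ a 0 + ∑' k : ℕ, d k := by
  have descent (k : ℕ) : a (k + 1) + a (k + 1) ≤ a k + d k := by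
    linarith [two_mul_le_add_of_sq_le_mul (hd k) (ha k) (hrec k)]
  have shift_summable : Summable fun k => a (k + 1) :=
    summable_of_add_succ_le (fun k => ha (k + 1)) ha descent hd_sum
  exact ⟨(summable_nat_add_iff 1).1 shift_summable,
    hasSum_le_of_add_succ_le ha descent shift_summable.hasSum hd_sum.hasSum⟩
end
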